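/- For every A ≥ 1 there exist constants c, C > 0 and an integer N such that for all integers n ≥ N and all integers m with 2 ≤ m ≤ n and (log n)/A ≤ m ≤ A·log n, writing u = n/m, one has c·u ≤ log p_{n,m} − u·(1 − log n) ≤ C·u. -/

import Mathlib

open Real

noncomputable section

/-- Predicate characterizing the Dickman function `ρ : [0,∞) → (0,∞)`:
continuous on `[0,∞)`, positive, equal to `1` on `[0,1]`, and satisfying the
delay differential equation `t·ρ'(t) + ρ(t-1) = 0` for `t > 1`. -/
def IsDickman (ρ : ℝ → ℝ) : Prop :=
  ContinuousOn ρ (Set.Ici 0) ∧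
  (∀ t : ℝ, 0 ≤ t → 0 < ρ t) ∧
  (∀ t ∈ Set.Icc (0:ℝ) 1, ρ t = 1) ∧
  (∀ t : ℝ, 1 < t → HasDerivAt ρ (-(ρ (t - 1)) / t) t)

/-- `ξ(u)`: for `u > 1`, the unique positive solution of `e^ξ = 1 + u·ξ`; otherwise `0`. -/
def xi (u : ℝ) : ℝ :=
  open Classical in
  if h : ∃ x : ℝ, 0 < x ∧ Real.exp x = 1 + u * x then h.choose else 0

/-- `p_{n,m}`: probability that a uniformly random permutation of `{1,…,n}` is `m`-friable,
i.e. has no cycle of length greater than `m`. -/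
def permProb (n m : ℕ) : ℝ :=
  (Nat.card {σ : Equiv.Perm (Fin n) // ∀ c ∈ σ.cycleType, c ≤ m} : ℝ) /
    (Nat.factorial n : ℝ)

/-- `p_{n,m,q}`: proportion of monic polynomials of degree `n` over a finite field `F`
(of cardinality `q`) that are `m`-friable, i.e. all of whose monic irreducible factors
have degree at most `m`. -/
def polyProb (F : Type) [Field F] [Fintype F] (n m : ℕ) : ℝ :=
  (Nat.card {f : Polynomial F // f.Monic ∧ f.natDegree = n ∧
      ∀ p : Polynomial F, p.Monic → Irreducible p → p ∣ f → p.natDegree ≤ m} : ℝ) /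
    (Fintype.card F : ℝ) ^ n

/-- `F_q(z) = ∏_{deg P ≤ m} (1 - (z/q)^{deg P})⁻¹`, the product over monic irreducible
polynomials `P` over `F` of degree at most `m`. -/
def FqFun (F : Type) [Field F] [Fintype F] (m : ℕ) (z : ℝ) : ℝ :=
  ∏ᶠ p ∈ {p : Polynomial F | p.Monic ∧ Irreducible p ∧ p.natDegree ≤ m},
    (1 - (z / (Fintype.card F : ℝ)) ^ p.natDegree)⁻¹

/-- `G_q(z) = F_q(z) · exp(-∑_{i=1}^m z^i/i)`. -/
def Gq (F : Type) [Field F] [Fintype F] (m : ℕ) (z : ℝ) : ℝ :=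
  FqFun F m z * Real.exp (-(∑ i ∈ Finset.Icc 1 m, z ^ i / (i : ℝ)))

/-- The coefficients `d_{m,i}`. -/
def dcoef (m i : ℕ) : ℝ :=
  if i = m then -(1 / (m : ℝ)) * ∑ j ∈ Finset.Icc 2 m, (1 : ℝ) / (j : ℝ)
  else Real.Gamma ((i : ℝ) + (i : ℝ) / (m : ℝ)) /
    (((m : ℝ) - (i : ℝ)) * (Nat.factorial i : ℝ) * Real.Gamma (1 + (i : ℝ) / (m : ℝ)))

/-- `T(s) = ∫₀^s ((e^t - 1)/t)·((t/m)/(1 - e^{-t/m}) - 1) dt`, integrand extended by `0` at `t = 0`. -/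
def Tfun (m : ℕ) (s : ℝ) : ℝ :=
  ∫ t in (0:ℝ)..s,
    if t = 0 then 0 else
      ((Real.exp t - 1) / t) * ((t / (m : ℝ)) / (1 - Real.exp (-t / (m : ℝ))) - 1)

end

/-! Write `u = n / m`. Counting permutations by cycle type gives `p_{n,m} = ∑ 1 / z_s`, the sum
being over the partitions `s` of `n` into parts at most `m`, with `z_s = ∏ i, i ^ cᵢ * cᵢ!` where
`cᵢ` is the multiplicity of `i`.

For the upper bound, weight each partition by `z ^ n` and drop the condition that the parts sum to
`n`: this is Rankin's inequality `p_{n,m} * z ^ n ≤ exp (∑ i ≤ m, z ^ i / i)`. Take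
`z = n ^ (1 / m)`, so that `z ^ n = exp (u * log n)`. Since `m ≤ A * log n` keeps
`z ≥ exp (1 / A)` away from `1`, the sum is comparable to its last term `z ^ m / m = u`.

For the lower bound, keep a single partition. Using only parts `m` (and a few parts `1`) gives
`u * (1 - log n)` up to `o(u)`. Using parts `m - 1` for a small proportion `ε` of the `u` parts
gains an entropy of at least `ε * u * log (1 / ε)`; the extra room this takes up costs at most
`ε * u * A` because `log n ≤ A * m`. With `ε = exp (-(A + 2))` the gain wins. -/

section CycleIndex

open Finset Equiv.Perm
open scoped Nat

/-- The number `z_s = ∏ i, i ^ cᵢ * cᵢ!`, where `cᵢ` is the multiplicity of `i` in `s`. It is the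
order of the centralizer of a permutation whose cycle lengths, fixed points included, form `s`. -/
def centralizerOrder (s : Multiset ℕ) : ℕ :=
  ∏ i ∈ s.toFinset, i ^ s.count i * (s.count i)!

theorem centralizerOrder_eq_prod_mul (s : Multiset ℕ) :
    centralizerOrder s = s.prod * ∏ i ∈ s.toFinset, (s.count i)! := by
  rw [centralizerOrder, prod_mul_distrib, prod_multiset_count]

theorem centralizerOrder_eq_prod_of_subset {s : Multiset ℕ} {t : Finset ℕ}
    (hst : s.toFinset ⊆ t) :
    centralizerOrder s = ∏ i ∈ t, i ^ s.count i * (s.count i)! :=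
  prod_subset hst fun i _ hi => by
    simp [Multiset.count_eq_zero_of_notMem (mt Multiset.mem_toFinset.2 hi)]

theorem centralizerOrder_replicate (k i : ℕ) :
    centralizerOrder (Multiset.replicate k i) = i ^ k * k ! := by
  rw [centralizerOrder_eq_prod_of_subset (t := {i}) fun j hj => mem_singleton.2 <|
    Multiset.eq_of_mem_replicate (Multiset.mem_toFinset.1 hj)]
  simp

theorem centralizerOrder_add {s t : Multiset ℕ} (hst : Disjoint s t) :
    centralizerOrder (s + t) = centralizerOrder s * centralizerOrder t := by
  rw [centralizerOrder, Multiset.toFinset_add, prod_union (Multiset.disjoint_toFinset.2 hst)]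
  have not_mem_t {i} (hi : i ∈ s.toFinset) : i ∉ t :=
    Multiset.disjoint_left.1 hst (Multiset.mem_toFinset.1 hi)
  have not_mem_s {i} (hi : i ∈ t.toFinset) : i ∉ s :=
    Multiset.disjoint_right.1 hst (Multiset.mem_toFinset.1 hi)
  congr 1 <;> refine prod_congr rfl fun i hi => ?_
  · simp [Multiset.count_eq_zero_of_notMem (not_mem_t hi)]
  · simp [Multiset.count_eq_zero_of_notMem (not_mem_s hi)]

theorem centralizerOrder_pos {s : Multiset ℕ} (hs : ∀ i ∈ s, 0 < i) : 0 < centralizerOrder s :=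
  prod_pos fun i hi =>
    Nat.mul_pos (pow_pos (hs i (Multiset.mem_toFinset.1 hi)) _) (Nat.factorial_pos _)

theorem parts_eq_filter_two_le_add_replicate {n : ℕ} (p : n.Partition) :
    p.parts = p.parts.filter (2 ≤ ·) +
      Multiset.replicate (n - (p.parts.filter (2 ≤ ·)).sum) 1 := by
  have hsplit := Multiset.filter_add_not (2 ≤ ·) p.parts
  obtain ⟨k, hk⟩ : ∃ k, p.parts.filter (¬2 ≤ ·) = Multiset.replicate k 1 := by
    refine ⟨_, Multiset.eq_replicate_card.2 fun i hi => ?_⟩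
    have := p.parts_pos (Multiset.mem_of_mem_filter hi)
    have := Multiset.of_mem_filter hi
    omega
  rw [hk] at hsplit
  have hsum := congrArg Multiset.sum hsplit
  rw [p.parts_sum, Multiset.sum_add, Multiset.sum_replicate, smul_eq_mul, mul_one] at hsum
  rw [← Nat.eq_sub_of_add_eq' hsum, hsplit]

variable {α : Type*} [Fintype α] [DecidableEq α]

theorem partition_eq_iff_cycleType_eq_filter {σ : Equiv.Perm α} {p : (Fintype.card α).Partition} :
    σ.partition = p ↔ σ.cycleType = p.parts.filter (2 ≤ ·) := by
  refine ⟨fun h => h ▸ filter_parts_partition_eq_cycleType.symm, fun h => ?_⟩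
  rw [Nat.Partition.ext_iff, parts_partition, ← sum_cycleType, h]
  exact (parts_eq_filter_two_le_add_replicate p).symm

theorem card_partition_eq_mul_centralizerOrder (p : (Fintype.card α).Partition) :
    #{σ : Equiv.Perm α | σ.partition = p} * centralizerOrder p.parts = (Fintype.card α)! := by
  set l := p.parts.filter (2 ≤ ·) with hl
  have two_le : ∀ i ∈ l, 2 ≤ i := fun i hi => Multiset.of_mem_filter hi
  have sum_le : l.sum ≤ Fintype.card α := by
    have hsum := congrArg Multiset.sum (parts_eq_filter_two_le_add_replicate p)
    rw [p.parts_sum, Multiset.sum_add, ← hl] at hsum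
    omega
  have hdisj : Disjoint l (Multiset.replicate (Fintype.card α - l.sum) 1) := by
    refine Multiset.disjoint_left.2 fun hi hi' => ?_
    simpa [Multiset.eq_of_mem_replicate hi'] using two_le _ hi
  have hcount := card_of_cycleType_mul_eq α l
  rw [if_pos ⟨sum_le, two_le⟩] at hcount
  rw [parts_eq_filter_two_le_add_replicate p, centralizerOrder_add hdisj,
    centralizerOrder_replicate, centralizerOrder_eq_prod_mul, ← hcount]
  simp only [partition_eq_iff_cycleType_eq_filter, ← hl]
  ring

theorem partition_mem_restricted_iff {m : ℕ} (hm : 0 < m) (σ : Equiv.Perm α) :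
    σ.partition ∈ Nat.Partition.restricted (Fintype.card α) (· ≤ m) ↔
      ∀ c ∈ σ.cycleType, c ≤ m := by
  have fixed_le : ∀ i ∈ Multiset.replicate (Fintype.card α - #σ.support) 1, i ≤ m := fun i hi =>
    (Multiset.eq_of_mem_replicate hi).trans_le hm
  simp only [Nat.Partition.restricted, mem_filter_univ, parts_partition, Multiset.mem_add]
  exact ⟨fun h c hc => h c (.inl hc), fun h c hc => hc.elim (h c) (fixed_le c)⟩

theorem card_forall_cycleType_le_div_factorial {m : ℕ} (hm : 0 < m) :
    (#{σ : Equiv.Perm α | ∀ c ∈ σ.cycleType, c ≤ m} : ℝ) / (Fintype.card α)! =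
      ∑ p ∈ Nat.Partition.restricted (Fintype.card α) (· ≤ m),
        (centralizerOrder p.parts : ℝ)⁻¹ := by
  rw [card_eq_sum_card_fiberwise (f := Equiv.Perm.partition)
    (t := Nat.Partition.restricted (Fintype.card α) (· ≤ m))
    fun σ hσ => (partition_mem_restricted_iff hm σ).2 (by simpa using hσ)]
  push_cast
  rw [sum_div]
  refine sum_congr rfl fun p hp => ?_
  have hfiber : ({σ ∈ ({σ | ∀ c ∈ σ.cycleType, c ≤ m} : Finset (Equiv.Perm α)) |
      σ.partition = p} : Finset _) = ({σ | σ.partition = p} : Finset (Equiv.Perm α)) := by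
    rw [filter_filter]
    refine filter_congr fun σ _ => and_iff_right_of_imp ?_
    rintro rfl
    exact (partition_mem_restricted_iff hm σ).1 hp
  have hz : (centralizerOrder p.parts : ℝ) ≠ 0 := by
    exact_mod_cast (centralizerOrder_pos fun _ => p.parts_pos).ne'
  rw [hfiber, div_eq_iff (by positivity), eq_inv_mul_iff_mul_eq₀ hz, mul_comm]
  exact_mod_cast card_partition_eq_mul_centralizerOrder p

theorem permProb_eq_sum_inv_centralizerOrder (n : ℕ) {m : ℕ} (hm : 0 < m) :
    permProb n m =
      ∑ p ∈ Nat.Partition.restricted n (· ≤ m), (centralizerOrder p.parts : ℝ)⁻¹ := by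
  have h := card_forall_cycleType_le_div_factorial (α := Fin n) hm
  rw [Fintype.card_fin] at h
  rw [permProb, Nat.card_eq_fintype_card, Fintype.card_subtype, h]

theorem inv_centralizerOrder_le_permProb {n m : ℕ} (hm : 0 < m) {s : Multiset ℕ}
    (s_sum : s.sum = n) (s_pos : ∀ i ∈ s, 0 < i) (s_le : ∀ i ∈ s, i ≤ m) :
    (centralizerOrder s : ℝ)⁻¹ ≤ permProb n m := by
  obtain ⟨p, rfl⟩ : ∃ p : n.Partition, p.parts = s := ⟨⟨s, fun {i} hi => s_pos i hi, s_sum⟩, rfl⟩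
  have hp : p ∈ Nat.Partition.restricted n (· ≤ m) := mem_filter.2 ⟨mem_univ p, s_le⟩
  rw [permProb_eq_sum_inv_centralizerOrder n hm]
  exact single_le_sum (f := fun p : n.Partition => (centralizerOrder p.parts : ℝ)⁻¹)
    (fun _ _ => inv_nonneg.2 (Nat.cast_nonneg _)) hp

theorem permProb_pos (n m : ℕ) : 0 < permProb n m := by
  have : Nonempty {σ : Equiv.Perm (Fin n) // ∀ c ∈ σ.cycleType, c ≤ m} := ⟨1, by simp⟩
  have : 0 < Nat.card {σ : Equiv.Perm (Fin n) // ∀ c ∈ σ.cycleType, c ≤ m} := Nat.card_pos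
  rw [permProb]
  positivity

end CycleIndex

section UpperBound

open Finset
open scoped Nat

theorem pow_sum_div_centralizerOrder {s : Multiset ℕ} {t : Finset ℕ} (hst : s.toFinset ⊆ t)
    (z : ℝ) :
    z ^ s.sum / centralizerOrder s = ∏ i ∈ t, (z ^ i / i) ^ s.count i / (s.count i)! := by
  rw [sum_multiset_count_of_subset s t hst, centralizerOrder_eq_prod_of_subset hst,
    ← prod_pow_eq_pow_sum]
  push_cast
  rw [← prod_div_distrib]
  refine prod_congr rfl fun i _ => ?_
  rw [smul_eq_mul, mul_comm, pow_mul, div_pow, div_div]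

theorem count_parts_le {n : ℕ} (p : n.Partition) (i : ℕ) : p.parts.count i ≤ n := by
  have hcard : p.parts.card ≤ n := by
    simpa [p.parts_sum] using Multiset.card_nsmul_le_sum (a := 1) fun _ hi => p.parts_pos hi
  exact (Multiset.count_le_card i p.parts).trans hcard

theorem toFinset_parts_subset_Icc {n m : ℕ} {p : n.Partition}
    (hp : p ∈ Nat.Partition.restricted n (· ≤ m)) : p.parts.toFinset ⊆ Icc 1 m := by
  intro i hi
  rw [Multiset.mem_toFinset] at hi
  exact mem_Icc.2 ⟨p.parts_pos hi, (mem_filter.1 hp).2 i hi⟩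

theorem sum_restricted_prod_count_le {f : ℕ → ℕ → ℝ} (hf : ∀ i k, 0 ≤ f i k) (n m : ℕ) :
    ∑ p ∈ Nat.Partition.restricted n (· ≤ m), ∏ i ∈ Icc 1 m, f i (p.parts.count i) ≤
      ∏ i ∈ Icc 1 m, ∑ k ∈ range (n + 1), f i k := by
  -- A partition is determined by its multiplicities, so the left side consists of some of the terms
  -- in the expansion of the product.
  let multiplicities (p : n.Partition) : ∀ i ∈ Icc 1 m, ℕ := fun i _ => p.parts.count i
  have hinj : Set.InjOn multiplicities (Nat.Partition.restricted n (· ≤ m)) := by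
    intro p hp q hq hpq
    refine Nat.Partition.ext (Multiset.ext.2 fun i => ?_)
    by_cases hi : i ∈ Icc 1 m
    · exact congrFun₂ hpq i hi
    · rw [Multiset.count_eq_zero_of_notMem
          fun h => hi (toFinset_parts_subset_Icc hp (Multiset.mem_toFinset.2 h)),
        Multiset.count_eq_zero_of_notMem
          fun h => hi (toFinset_parts_subset_Icc hq (Multiset.mem_toFinset.2 h))]
  calc ∑ p ∈ Nat.Partition.restricted n (· ≤ m), ∏ i ∈ Icc 1 m, f i (p.parts.count i)
      = ∑ c ∈ (Nat.Partition.restricted n (· ≤ m)).image multiplicities,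
          ∏ i ∈ (Icc 1 m).attach, f i.1 (c i.1 i.2) := by
        rw [sum_image hinj]
        exact sum_congr rfl fun p _ => (prod_attach (Icc 1 m) fun i => f i (p.parts.count i)).symm
    _ ≤ ∑ c ∈ (Icc 1 m).pi fun _ => range (n + 1), ∏ i ∈ (Icc 1 m).attach, f i.1 (c i.1 i.2) := by
        refine sum_le_sum_of_subset_of_nonneg (image_subset_iff.2 fun p _ => ?_)
          fun _ _ _ => prod_nonneg fun _ _ => hf _ _
        exact mem_pi.2 fun i _ => mem_range_succ_iff.2 (count_parts_le p i)
    _ = ∏ i ∈ Icc 1 m, ∑ k ∈ range (n + 1), f i k := (prod_sum _ _ _).symm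

theorem permProb_mul_pow_le_exp_sum (n : ℕ) {m : ℕ} (hm : 0 < m) {z : ℝ} (hz : 0 ≤ z) :
    permProb n m * z ^ n ≤ exp (∑ i ∈ Icc 1 m, z ^ i / i) :=
  calc permProb n m * z ^ n
      = ∑ p ∈ Nat.Partition.restricted n (· ≤ m),
          ∏ i ∈ Icc 1 m, (z ^ i / i) ^ p.parts.count i / (p.parts.count i)! := by
        rw [permProb_eq_sum_inv_centralizerOrder n hm, sum_mul]
        refine sum_congr rfl fun p hp => ?_
        rw [← pow_sum_div_centralizerOrder (toFinset_parts_subset_Icc hp), p.parts_sum,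
          inv_mul_eq_div]
    _ ≤ ∏ i ∈ Icc 1 m, ∑ k ∈ range (n + 1), (z ^ i / i) ^ k / k ! :=
        sum_restricted_prod_count_le (f := fun i k => (z ^ i / i) ^ k / k !)
          (fun _ _ => by positivity) n m
    _ ≤ ∏ i ∈ Icc 1 m, exp (z ^ i / i) :=
        prod_le_prod (fun _ _ => sum_nonneg fun _ _ => by positivity) fun _ _ =>
          sum_le_exp_of_nonneg (by positivity) _
    _ = exp (∑ i ∈ Icc 1 m, z ^ i / i) := (exp_sum _ _).symm

theorem sum_Icc_pow_div_le (m : ℕ) {z : ℝ} (hz : 1 < z) :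
    ∑ i ∈ Icc 1 m, z ^ i / i ≤ ((1 - z⁻¹) ^ 2)⁻¹ * (z ^ m / m) := by
  -- Since `m ≤ i * (m - i + 1)`, the `i`-th term is at most `(m - i + 1) * z ^ i / m`.
  have : 0 < z := one_pos.trans hz
  have hgeom : HasSum (fun j : ℕ => ((j : ℝ) + 1) * z⁻¹ ^ j) ((1 - z⁻¹) ^ 2)⁻¹ := by
    simpa using hasSum_choose_mul_geometric_of_norm_lt_one 1 (r := z⁻¹)
      (by rw [norm_of_nonneg (by positivity)]; exact inv_lt_one_of_one_lt₀ hz)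
  have term_le : ∀ j ∈ range m,
      z ^ (m - j) / ((m - j : ℕ) : ℝ) ≤ ((j : ℝ) + 1) * z⁻¹ ^ j * (z ^ m / m) := by
    intro j hj
    obtain ⟨i, rfl⟩ := Nat.exists_eq_add_of_le' (mem_range_le hj)
    have hi : (1 : ℝ) ≤ i := by have := mem_range.1 hj; exact_mod_cast (by omega : 1 ≤ i)
    have inv_le : 1 / (i : ℝ) ≤ (j + 1) / (i + j) := by
      rw [div_le_div_iff₀ (by positivity) (by positivity)]
      nlinarith [(Nat.cast_nonneg j : (0 : ℝ) ≤ j)]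
    rw [Nat.add_sub_cancel]
    push_cast
    calc z ^ i / i = z ^ i * (1 / i) := by ring
      _ ≤ z ^ i * ((j + 1) / (i + j)) := by gcongr
      _ = (j + 1) * z⁻¹ ^ j * (z ^ (i + j) / (i + j)) := by
        rw [inv_pow, pow_add]; field_simp
  calc ∑ i ∈ Icc 1 m, z ^ i / i
      = ∑ j ∈ range m, z ^ (m - j) / ((m - j : ℕ) : ℝ) :=
        sum_nbij' (m - ·) (m - ·) (by grind) (by grind) (by grind) (by grind) (by grind)
    _ ≤ (∑ j ∈ range m, ((j : ℝ) + 1) * z⁻¹ ^ j) * (z ^ m / m) := by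
        rw [sum_mul]; exact sum_le_sum term_le
    _ ≤ ((1 - z⁻¹) ^ 2)⁻¹ * (z ^ m / m) := by
        gcongr
        exact sum_le_hasSum _ (fun _ _ => by positivity) hgeom

theorem log_permProb_add_mul_log_le {A : ℝ} (hA : 0 < A) {n m : ℕ} (hm : 0 < m)
    (hmn : m ≤ A * log n) :
    log (permProb n m) + n / m * log n ≤ ((1 - exp (-(1 / A))) ^ 2)⁻¹ * (n / m) := by
  have hm0 : (0 : ℝ) < m := Nat.cast_pos.2 hm
  have hL : 0 < log n := pos_of_mul_pos_right (hm0.trans_le hmn) hA.le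
  have hn0 : (0 : ℝ) < n := Nat.cast_pos.2 (Nat.pos_of_ne_zero (by rintro rfl; simp at hL))
  set z := exp (log n / m) with hz
  have z_pow_m : z ^ m = n := by rw [hz, ← exp_nat_mul, mul_div_cancel₀ _ hm0.ne', exp_log hn0]
  have z_pow_n : z ^ n = exp (n / m * log n) := by rw [hz, ← exp_nat_mul]; ring_nf
  have z_inv_le : z⁻¹ ≤ exp (-(1 / A)) := by
    rw [hz, ← exp_neg, exp_le_exp, neg_le_neg_iff, div_le_div_iff₀ hA hm0]
    linarith
  have hlt : exp (-(1 / A)) < 1 := exp_lt_one_iff.2 (by simpa using hA)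
  have one_lt_z : 1 < z := one_lt_exp_iff.2 (by positivity)
  have hp := permProb_pos n m
  calc log (permProb n m) + n / m * log n
      = log (permProb n m * z ^ n) := by
        rw [log_mul hp.ne' (by positivity), z_pow_n, log_exp]
    _ ≤ ∑ i ∈ Icc 1 m, z ^ i / i :=
        (log_le_iff_le_exp (by positivity)).2
          (permProb_mul_pow_le_exp_sum n hm (exp_pos (log n / m)).le)
    _ ≤ ((1 - z⁻¹) ^ 2)⁻¹ * (n / m) := z_pow_m ▸ sum_Icc_pow_div_le m one_lt_z
    _ ≤ ((1 - exp (-(1 / A))) ^ 2)⁻¹ * (n / m) := by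
        gcongr

end UpperBound

section LowerBound

open scoped Nat

theorem log_factorial_le_mul_log_self (k : ℕ) : log (k ! : ℝ) ≤ k * log k := by
  rw [← log_pow]
  exact log_le_log (by positivity) (by exact_mod_cast k.factorial_le_pow)

theorem log_factorial_le_mul_log_sub (k : ℕ) :
    log (k ! : ℝ) ≤ k * log k - k + log k / 2 + 1 := by
  rcases k with _ | k
  · simp
  have hanti := Stirling.log_stirlingSeq'_antitone (Nat.zero_le k)
  simp only [Function.comp_apply, Stirling.log_stirlingSeq_formula, Nat.succ_eq_add_one] at hanti
  rw [log_div (by positivity) (exp_pos 1).ne', log_mul (by norm_num) (by positivity)] at hanti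
  norm_num at hanti
  push_cast
  linarith

theorem nat_mul_log_add_nat_mul_log_le {k m : ℕ} {x : ℝ} (hm : 0 < m) (hx : k * m ≤ x) :
    k * log m + k * log k ≤ k * log x := by
  rcases Nat.eq_zero_or_pos k with rfl | hk
  · simp
  rw [← mul_add, add_comm, ← log_mul (by positivity) (by positivity)]
  gcongr

theorem mul_log_add_log_factorial_le {k m n : ℕ} (hm : 0 < m) (hkm : k * m ≤ n) :
    k * log m + log (k ! : ℝ) ≤ k * log n - k + 1 + log n := by
  have h := nat_mul_log_add_nat_mul_log_le (k := k) (x := n) hm (by exact_mod_cast hkm)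
  have log_k_le : log k ≤ log n := by
    rcases k.eq_zero_or_pos with rfl | hk
    · simpa using log_natCast_nonneg n
    · exact log_le_log (by positivity) (by exact_mod_cast (Nat.le_mul_of_pos_right k hm).trans hkm)
  linarith [log_factorial_le_mul_log_sub k, log_natCast_nonneg n]

theorem neg_log_two_lengths_le_log_permProb {n m a b r : ℕ} (hm : 3 ≤ m)
    (hn : a * (m - 1) + b * m + r = n) :
    -((a * log m + log a !) + (b * log m + log b !) + log r !) ≤ log (permProb n m) := by
  set s := Multiset.replicate a (m - 1) + Multiset.replicate b m + Multiset.replicate r 1 with hs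
  have s_sum : s.sum = n := by simpa [hs] using hn
  have mem_s {i} (hi : i ∈ s) : i = m - 1 ∨ i = m ∨ i = 1 := by
    simp only [hs, Multiset.mem_add, Multiset.mem_replicate] at hi
    tauto
  have s_order : centralizerOrder s = (m - 1) ^ a * a ! * (m ^ b * b !) * r ! := by
    rw [hs, centralizerOrder_add, centralizerOrder_add]
    · simp [centralizerOrder_replicate]
    all_goals
      refine Multiset.disjoint_left.2 fun hi hi' => ?_
      simp only [Multiset.mem_add, Multiset.mem_replicate] at hi hi'
      omega
  have order_pos : 0 < centralizerOrder s :=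
    centralizerOrder_pos fun i hi => by have := mem_s hi; omega
  have order_le : centralizerOrder s ≤ m ^ a * a ! * (m ^ b * b !) * r ! := by
    rw [s_order]
    gcongr
    exact Nat.sub_le m 1
  have : (m : ℝ) ≠ 0 := by positivity
  calc -((a * log m + log a !) + (b * log m + log b !) + log r !)
      = -log (m ^ a * a ! * (m ^ b * b !) * r !) := by
        repeat rw [log_mul (by positivity) (by positivity)]
        rw [log_pow, log_pow]
    _ ≤ -log (centralizerOrder s) := by
        gcongr
        exact_mod_cast order_le
    _ = log (centralizerOrder s : ℝ)⁻¹ := (log_inv _).symm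
    _ ≤ log (permProb n m) := by
        gcongr
        exact inv_centralizerOrder_le_permProb (by omega) s_sum
          (fun i hi => by have := mem_s hi; omega) (fun i hi => by have := mem_s hi; omega)

theorem sub_le_log_permProb_sub_of_add_eq {A : ℝ} {n m a b r : ℕ} (hm : 3 ≤ m) (hn : 0 < n)
    (hnm : log n ≤ A * m) (ha : a * m ≤ exp (-(A + 2)) * n) (hr : r < m)
    (hsum : a * (m - 1) + b * m + r = n) :
    a - (2 + log n + m * log n) ≤ log (permProb n m) - n / m * (1 - log n) := by
  -- Shortening `a` cycles from `m` to `m - 1` makes room for at most `a / m` more cycles, which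
  -- costs `a / m * log n ≤ a * A`. On the other hand
  -- `a ! ≤ a ^ a ≤ (exp (-(A + 2)) * (n / m)) ^ a`, which gains `a * (A + 2)`.
  set u : ℝ := n / m with hu
  have hm0 : (0 : ℝ) < m := by positivity
  have hum : u * m = n := div_mul_cancel₀ _ hm0.ne'
  have hb : b * m ≤ n := by omega
  have hsum' : (a : ℝ) * m + b * m + r = n + a := by
    obtain ⟨k, rfl⟩ := Nat.exists_eq_add_of_le' (show 1 ≤ m by omega)
    rw [← hsum]
    push_cast [Nat.add_sub_cancel]
    ring
  have cost_a : a * log m + log a ! ≤ a * (log n - (A + 2)) := by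
    have h := nat_mul_log_add_nat_mul_log_le (by omega) ha
    rw [log_mul (exp_pos _).ne' (by positivity), log_exp] at h
    linarith [log_factorial_le_mul_log_self a]
  have cost_b : b * log m + log b ! ≤ b * log n - b + 1 + log n :=
    mul_log_add_log_factorial_le (by omega) hb
  have cost_r : log r ! ≤ m * log n := by
    have h := nat_mul_log_add_nat_mul_log_le (k := r) (m := 1) (x := n) one_pos
      (by exact_mod_cast (by omega : r * 1 ≤ n))
    have : (r : ℝ) * log n ≤ m * log n := by gcongr
    rw [Nat.cast_one, log_one, mul_zero, zero_add] at h
    linarith [log_factorial_le_mul_log_self r]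
  have add_sub_le : a + b - u ≤ a / m := by
    rw [le_div_iff₀ hm0, sub_mul, hum]
    linarith [(Nat.cast_nonneg r : (0 : ℝ) ≤ r)]
  have excess : (a + b - u) * log n ≤ a * A :=
    calc (a + b - u) * log n ≤ a / m * (A * m) := by gcongr
      _ = a * A := by field_simp
  have le_b : u - 1 - a ≤ b := by
    have hrm : (r : ℝ) ≤ m := by exact_mod_cast hr.le
    refine le_of_mul_le_mul_right ?_ hm0
    rw [sub_mul, sub_mul, hum]
    linarith
  linarith [neg_log_two_lengths_le_log_permProb hm hsum]

theorem sub_le_log_permProb_sub {A : ℝ} (hA : 0 ≤ A) {n m : ℕ} (hm : 3 ≤ m) (hn : 0 < n)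
    (hnm : log n ≤ A * m) :
    exp (-(A + 2)) * (n / m) - (3 + log n + m * log n) ≤
      log (permProb n m) - n / m * (1 - log n) := by
  set a := ⌊exp (-(A + 2)) * (n / m)⌋₊
  have ha : a * m ≤ exp (-(A + 2)) * n :=
    calc a * m ≤ exp (-(A + 2)) * (n / m) * m := by
          gcongr
          exact Nat.floor_le (by positivity)
      _ = exp (-(A + 2)) * n := by field_simp
  have ham : a * (m - 1) ≤ n := by
    have : (a * m : ℝ) ≤ n :=
      ha.trans (mul_le_of_le_one_left n.cast_nonneg (exp_le_one_iff.2 (by linarith)))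
    exact (Nat.mul_le_mul_left a (Nat.sub_le m 1)).trans (by exact_mod_cast this)
  have hsum : a * (m - 1) + (n - a * (m - 1)) / m * m + (n - a * (m - 1)) % m = n := by
    rw [add_assoc, Nat.div_add_mod', Nat.add_sub_cancel' ham]
  have hle := sub_le_log_permProb_sub_of_add_eq hm hn hnm ha (Nat.mod_lt _ (by omega)) hsum
  linarith [Nat.lt_floor_add_one (exp (-(A + 2)) * (n / m))]

end LowerBound

open Filter in
theorem eventually_log_add_mul_log_le {A c : ℝ} (hA : 0 < A) (hc : 0 < c) :
    ∀ᶠ n : ℕ in atTop, ∀ m : ℕ, 0 < m → m ≤ A * log n →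
      3 + log n + m * log n ≤ c * (n / m) := by
  have hB : 0 < (4 + A) * A := by positivity
  have hlog : ∀ᶠ n : ℕ in atTop, 1 ≤ log n :=
    (tendsto_log_atTop.comp tendsto_natCast_atTop_atTop).eventually_ge_atTop 1
  have hcube : ∀ᶠ n : ℕ in atTop, (4 + A) * A * log n ^ 3 ≤ c * n := by
    filter_upwards [tendsto_natCast_atTop_atTop.eventually
      ((isLittleO_pow_log_id_atTop (n := 3)).bound (div_pos hc hB)), hlog] with n hn h1
    rw [id, norm_natCast, norm_of_nonneg (by positivity), div_mul_eq_mul_div, le_div_iff₀ hB] at hn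
    linarith
  filter_upwards [hlog, hcube] with n h1 h3 m hm hmn
  have hm0 : (0 : ℝ) < m := Nat.cast_pos.2 hm
  rw [← mul_div_assoc, le_div_iff₀ hm0]
  calc (3 + log n + m * log n) * m ≤ (4 + A) * log n ^ 2 * (A * log n) := by
        gcongr
        nlinarith
    _ = (4 + A) * A * log n ^ 3 := by ring
    _ ≤ c * n := h3

/-- For every `A ≥ 1` there exist `c, C > 0` and `N` such that for all
`n ≥ N` and `2 ≤ m ≤ n` with `(log n)/A ≤ m ≤ A·log n`, writing `u = n/m`, one has
`c·u ≤ log p_{n,m} − u·(1 − log n) ≤ C·u`. -/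
theorem stmt5 :
    ∀ A : ℝ, 1 ≤ A → ∃ c C : ℝ, 0 < c ∧ 0 < C ∧ ∃ N : ℕ, ∀ n : ℕ, N ≤ n →
      ∀ m : ℕ, 2 ≤ m → m ≤ n → Real.log n / A ≤ (m : ℝ) → (m : ℝ) ≤ A * Real.log n →
      ∀ u : ℝ, u = (n : ℝ) / (m : ℝ) →
      c * u ≤ Real.log (permProb n m) - u * (1 - Real.log n) ∧
        Real.log (permProb n m) - u * (1 - Real.log n) ≤ C * u := by
  intro A hA
  have hA0 : 0 < A := by linarith
  have hε : 0 < exp (-(A + 2)) / 2 := half_pos (exp_pos _)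
  have hlt : exp (-(1 / A)) < 1 := exp_lt_one_iff.2 (by simpa using hA0)
  have log_ge : ∀ᶠ n : ℕ in Filter.atTop, 3 * A ≤ log n :=
    (tendsto_log_atTop.comp tendsto_natCast_atTop_atTop).eventually_ge_atTop (3 * A)
  obtain ⟨N, hN⟩ := Filter.eventually_atTop.1
    (log_ge.and (eventually_log_add_mul_log_le hA0 hε))
  refine ⟨exp (-(A + 2)) / 2, ((1 - exp (-(1 / A))) ^ 2)⁻¹, hε,
    inv_pos.2 (pow_pos (sub_pos.2 hlt) 2), N, ?_⟩
  rintro n hn m hm hmn hle hge u rfl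
  obtain ⟨hlog, herror⟩ := hN n hn
  have hm3 : 3 ≤ m := by exact_mod_cast ((le_div_iff₀ hA0).2 hlog).trans hle
  constructor
  · have hlower := sub_le_log_permProb_sub hA0.le hm3 (by omega) ((div_le_iff₀' hA0).1 hle)
    linarith [herror m (by omega) hge]
  · have hupper := log_permProb_add_mul_log_le hA0 (by omega) hge
    have hu : (0 : ℝ) ≤ n / m := by positivity
    linarith
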